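/- Let x₁, x₂, x₃, x₄ ∈ ℝ² be the nodes of a (possibly concave, tangled) bilinear quadrilateral element with isoparametric map φ. Suppose two distinct parametric points ξ⁺, ξ⁻ ∈ [−1,1]² are mapped to the same physical point, φ(ξ⁺) = φ(ξ⁻) (a point of the fold). If the nodal values are sampled from an affine map L : ℝ² → ℝ², i.e. ûᵢ = L(xᵢ), then the two branch values of the interpolated field agree at that point: Σᵢ Nᵢ(ξ⁺) ûᵢ = Σᵢ Nᵢ(ξ⁻) ûᵢ. (Thus the piecewise compatibility constraint ⟦u⟧ = 0 of i-TFEM is automatically satisfied by all affine fields, so enforcing it does not preclude capturing constant strain states.) -/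

import Mathlib

/-- Bilinear shape functions on the reference square `[-1,1]²`. -/
noncomputable def N1 (ξ η : ℝ) : ℝ := (1 - ξ) * (1 - η) / 4
noncomputable def N2 (ξ η : ℝ) : ℝ := (1 + ξ) * (1 - η) / 4
noncomputable def N3 (ξ η : ℝ) : ℝ := (1 + ξ) * (1 + η) / 4
noncomputable def N4 (ξ η : ℝ) : ℝ := (1 - ξ) * (1 + η) / 4

/-- Isoparametric bilinear map of the Q4 element with nodes `x₁, x₂, x₃, x₄ ∈ ℝ²`. -/
noncomputable def bilinearMap (x1 x2 x3 x4 : Fin 2 → ℝ) (p : ℝ × ℝ) : Fin 2 → ℝ :=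
  N1 p.1 p.2 • x1 + N2 p.1 p.2 • x2 + N3 p.1 p.2 • x3 + N4 p.1 p.2 • x4

/-- Q4 interpolant of nodal values `û₁, û₂, û₃, û₄` at a parametric point. -/
noncomputable def q4Interp (u1 u2 u3 u4 : Fin 2 → ℝ) (p : ℝ × ℝ) : Fin 2 → ℝ :=
  N1 p.1 p.2 • u1 + N2 p.1 p.2 • u2 + N3 p.1 p.2 • u3 + N4 p.1 p.2 • u4

/-- If two distinct parametric points `ξ⁺ ≠ ξ⁻` of the parametric square are
mapped by a (possibly concave, tangled) Q4 element to the same physical point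
(a point of the fold), and the nodal values are sampled from an affine map
`L(x) = Ax + b`, then the two branch values of the interpolated field agree:
the piecewise compatibility constraint `⟦u⟧ = 0` of i-TFEM is automatically
satisfied by all affine fields. -/
theorem affine_field_jump_vanishes_on_fold (x1 x2 x3 x4 : Fin 2 → ℝ)
    (A : Matrix (Fin 2) (Fin 2) ℝ) (b : Fin 2 → ℝ)
    (L : (Fin 2 → ℝ) → (Fin 2 → ℝ)) (hL : ∀ x, L x = A.mulVec x + b)
    (u1 u2 u3 u4 : Fin 2 → ℝ)
    (hu1 : u1 = L x1) (hu2 : u2 = L x2) (hu3 : u3 = L x3) (hu4 : u4 = L x4)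
    (ξp ξm : ℝ × ℝ)
    (hξp : ξp ∈ Set.Icc ((-1, -1) : ℝ × ℝ) (1, 1))
    (hξm : ξm ∈ Set.Icc ((-1, -1) : ℝ × ℝ) (1, 1))
    (hne : ξp ≠ ξm)
    (hfold : bilinearMap x1 x2 x3 x4 ξp = bilinearMap x1 x2 x3 x4 ξm) :
    q4Interp u1 u2 u3 u4 ξp = q4Interp u1 u2 u3 u4 ξm := by
  have key : ∀ p, q4Interp u1 u2 u3 u4 p = A.mulVec (bilinearMap x1 x2 x3 x4 p) + b := by
    intro p
    subst hu1 hu2 hu3 hu4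
    simp only [q4Interp, bilinearMap, hL, Matrix.mulVec_add, Matrix.mulVec_smul]
    ext i
    simp only [Pi.add_apply, Pi.smul_apply, smul_eq_mul, N1, N2, N3, N4]
    ring
  rw [key, key, hfold]
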